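/- Let V be a finite type, R : V → V → Prop a binary relation, and g : Finset V a seed set. Define step : Finset V → Finset V by step S = S ∪ (Finset.univ.filter (fun v => ∃ u ∈ S, R u v)) (using a decidable instance for R and membership). Then the iterate step^[Fintype.card V] g, viewed as a set, equals {v | ∃ u ∈ g, Relation.ReflTransGen R u v}. (This combines the termination and correctness claims for SCRUB: after at most |V| expansion iterations, the algorithm has computed exactly the set of objects reachable from the goal objects along binary predicates.) -/

import Mathlib

/-! The reachable set is the least fixed point of the expansion step above the seed. The iterates of
the step stay below it, and each one that is not yet a fixed point is strictly smaller than the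
next; so cardinality allows at most as many proper expansions as there are reachable objects. -/

section Iterate

variable {α : Type*} [PartialOrder α] {f : α → α} {r : α → ℕ} {t x : α} {n : ℕ}

theorem isFixedPt_iterate_of_strictMonoOn (hf : id ≤ f) (hr : StrictMonoOn r (Set.Iic t))
    (hx : ∀ m, f^[m] x ≤ t) (hn : r t ≤ n) : Function.IsFixedPt f (f^[n] x) := by
  have orbit_mono : Monotone fun m ↦ f^[m] x :=
    fun _ _ h ↦ Function.monotone_iterate_of_id_le hf h x
  have rank_mono : Monotone fun m ↦ r (f^[m] x) :=
    fun _ _ h ↦ hr.monotoneOn (hx _) (hx _) (orbit_mono h)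
  have rank_le (m : ℕ) : r (f^[m] x) ≤ r t := hr.monotoneOn (hx m) le_rfl (hx m)
  have fixed_of_rank_eq (m : ℕ) (h : r (f^[m] x) = r (f^[m + 1] x)) :
      Function.IsFixedPt f (f^[m] x) :=
    (Function.iterate_succ_apply' f m x).symm.trans <|
      ((orbit_mono m.le_succ).eq_of_not_lt fun hlt ↦ (hr (hx m) (hx _) hlt).ne h).symm
  have rank_stable (m : ℕ) (h : r (f^[m] x) = r (f^[m + 1] x)) :
      r (f^[m + 1] x) = r (f^[m + 2] x) := by
    simp only [Function.iterate_succ_apply', (fixed_of_rank_eq m h).eq]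
  have rank_eq {k : ℕ} (hk : r t ≤ k) : r (f^[k] x) = r (f^[r t] x) :=
    Nat.stabilises_of_monotone rank_mono rank_le rank_stable hk
  exact fixed_of_rank_eq n ((rank_eq hn).trans (rank_eq (hn.trans n.le_succ)).symm)

theorem iterate_eq_of_isLeast_isFixedPt (hmono : Monotone f) (hf : id ≤ f)
    (ht : IsLeast {y | x ≤ y ∧ Function.IsFixedPt f y} t) (hr : StrictMonoOn r (Set.Iic t))
    (hn : r t ≤ n) : f^[n] x = t := by
  obtain ⟨⟨hxt, ht_fixed⟩, ht_least⟩ := ht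
  have iterate_le (m : ℕ) : f^[m] x ≤ t :=
    (hmono.iterate m hxt).trans_eq (ht_fixed.iterate m)
  exact (iterate_le n).antisymm <| ht_least
    ⟨Function.id_le_iterate_of_id_le hf n x, isFixedPt_iterate_of_strictMonoOn hf hr iterate_le hn⟩

end Iterate

theorem strictMonoOn_ncard_Iic {V : Type*} {T : Set V} (hT : T.Finite) :
    StrictMonoOn Set.ncard (Set.Iic T) :=
  fun _ _ _ hB hAB ↦ Set.ncard_lt_ncard hAB (hT.subset hB)

section Reachability

variable {V : Type*} (R : V → V → Prop)

/-- One round of the SCRUB loop: adjoin to `S` every `R`-successor of an element of `S`. It acts on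
sets; on a finite type, coercion from finsets carries the computable step to this one. -/
def expansionStep (S : Set V) : Set V :=
  S ∪ {v | ∃ u ∈ S, R u v}

/-- The set of objects joined to an element of `g` by a possibly empty `R`-path; this is the
sufficient object set SCRUB is meant to compute. -/
def reachableSet (g : Set V) : Set V :=
  {v | ∃ u ∈ g, Relation.ReflTransGen R u v}

theorem expansionStep_mono : Monotone (expansionStep R) :=
  fun _ _ hST ↦ Set.union_subset_union hST fun _ ⟨u, hu, huv⟩ ↦ ⟨u, hST hu, huv⟩

theorem id_le_expansionStep : id ≤ expansionStep R :=
  fun _ ↦ Set.subset_union_left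

theorem isFixedPt_expansionStep_iff {S : Set V} :
    Function.IsFixedPt (expansionStep R) S ↔ ∀ u ∈ S, ∀ v, R u v → v ∈ S := by
  rw [Function.IsFixedPt, expansionStep, Set.union_eq_left]
  exact ⟨fun h u hu v huv ↦ h ⟨u, hu, huv⟩, fun h v ⟨u, hu, huv⟩ ↦ h u hu v huv⟩

theorem isLeast_reachableSet (g : Set V) :
    IsLeast {S | g ⊆ S ∧ Function.IsFixedPt (expansionStep R) S} (reachableSet R g) := by
  simp only [isFixedPt_expansionStep_iff]
  refine ⟨⟨fun u hu ↦ ⟨u, hu, .refl⟩, ?_⟩, ?_⟩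
  · rintro v ⟨u, hu, huv⟩ w hvw
    exact ⟨u, hu, huv.tail hvw⟩
  · rintro S ⟨hgS, hS⟩ v ⟨u, hu, huv⟩
    induction huv with
    | refl => exact hgS hu
    | tail _ hvw hv => exact hS _ hv _ hvw

theorem scrub_iterate_eq_reachable_general {g : Set V} (hg : (reachableSet R g).Finite) {n : ℕ}
    (hn : (reachableSet R g).ncard ≤ n) : (expansionStep R)^[n] g = reachableSet R g :=
  iterate_eq_of_isLeast_isFixedPt (expansionStep_mono R) (id_le_expansionStep R)
    (isLeast_reachableSet R g) (strictMonoOn_ncard_Iic hg) hn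

theorem semiconj_coe_expansionStep [Fintype V] [DecidableEq V] [DecidableRel R] :
    Function.Semiconj ((↑) : Finset V → Set V)
      (fun S ↦ S ∪ Finset.univ.filter (fun v ↦ ∃ u ∈ S, R u v)) (expansionStep R) := by
  intro S
  simp only [expansionStep, Finset.coe_union, Finset.coe_filter_univ, Finset.mem_coe]

end Reachability

/-- SCRUB termination + correctness: iterating the one-step expansion
`step S = S ∪ {v | ∃ u ∈ S, R u v}` for `Fintype.card V` steps starting from the
goal set `g` yields exactly the set of vertices reachable from `g` under `R`. -/
theorem scrub_iterate_eq_reachable {V : Type*} [Fintype V] [DecidableEq V]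
    (R : V → V → Prop) [DecidableRel R] (g : Finset V) :
    (((fun S : Finset V =>
        S ∪ Finset.univ.filter (fun v => ∃ u ∈ S, R u v))^[Fintype.card V] g : Finset V)
      : Set V)
    = {v | ∃ u ∈ g, Relation.ReflTransGen R u v} :=
  ((semiconj_coe_expansionStep R).iterate_right _ g).trans <|
    scrub_iterate_eq_reachable_general R (Set.toFinite _)
      ((Set.ncard_le_card _).trans_eq Nat.card_eq_fintype_card)
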